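/- arXiv:2008.13098 — 2 statements merged into one kernel-verified Lean document; each statement's English description precedes it below -/
import Mathlib

section
/- Adaptive gradient method with an inexact model (uniform constant). Under the hypotheses of the general bound for the adaptive gradient method, assume additionally that there is a constant L > 0 with L_{k+1} ≤ 2L for all 0 ≤ k ≤ N−1 (as is guaranteed when a (δ_k, L, ‖·‖)-model of f exists at every x_k and L_0 ≤ 2L). Then A_N ≥ N/(2L) and f(x̄_N) − f(x_*) ≤ 2LR²/N + (2L/N) Σ_{k=0}^{N-1} δ̃_k + (2/A_N) Σ_{k=0}^{N-1} α_{k+1} δ_k, where α_{k+1} = 1/L_{k+1}, A_N = Σ_{k=0}^{N-1} α_{k+1}, x̄_N = (1/A_N) Σ_{k=0}^{N-1} α_{k+1} x_{k+1}, and V[x_0](x_*) ≤ R². -/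
open Finset RealInnerProductSpace

/-!
Let `V` be the Bregman divergence of `d`. An inexact prox-step `y` from `x`, for a convex
function `φ`, satisfies `φ y + V[x](y) + V[y](z) ≤ φ z + V[x](z) + ε`: the subgradient inequality
at `y`, tested along the segment from `y` to `z`, differentiates to a lower bound on the derivative
of `d` at `y`, since convexity of `φ` makes its contribution linear along the segment.
For `φ = ψ / L` the term `V[x](y) ≥ ‖y - x‖² / 2` absorbs the quadratic error of the descent
condition, so each step satisfies
`(f(y) - f(z)) / L ≤ V[x](z) - V[y](z) + ε + 2 δ / L`.
Summing telescopes the divergences, and Jensen's inequality passes to the averaged iterate.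
-/

section OneStep

variable {E : Type*} [NormedAddCommGroup E] [NormedSpace ℝ E] {Q : Set E} {f d φ : E → ℝ}
  {d' : E → StrongDual ℝ E} {ρ : E → ℝ} {x y z : E} {ε : ℝ}

lemma hasFDerivWithinAt_apply_sub_le_of_lineMap_le {l : StrongDual ℝ E} {u : ℝ → ℝ} {u' : ℝ}
    (hQ : Convex ℝ Q) (hy : y ∈ Q) (hz : z ∈ Q) (hd : HasFDerivWithinAt d l Q y)
    (hu : HasDerivAt u u' 0) (hu₀ : u 0 = d y)
    (hle : ∀ t ∈ Set.Icc (0 : ℝ) 1, d (AffineMap.lineMap y z t) ≤ u t) :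
    l (z - y) ≤ u' := by
  have hline : HasDerivWithinAt (d ∘ AffineMap.lineMap y z) (l (z - y)) (Set.Icc (0 : ℝ) 1) 0 :=
    HasFDerivWithinAt.comp_hasDerivWithinAt (t := Q) 0 (by simpa using hd)
      AffineMap.hasDerivWithinAt_lineMap (hQ.mapsTo_lineMap hy hz)
  have hmin : IsMinOn (fun t => u t - d (AffineMap.lineMap y z t)) (Set.Icc (0 : ℝ) 1) 0 :=
    fun t ht => by simpa [hu₀] using hle t ht
  have hone : (1 : ℝ) ∈ posTangentConeAt (Set.Icc (0 : ℝ) 1) 0 :=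
    mem_posTangentConeAt_of_segment_subset (by simp [segment_eq_Icc])
  simpa using hmin.localize.hasFDerivWithinAt_nonneg
    (hu.hasDerivWithinAt.sub hline).hasFDerivWithinAt hone

/-- `1`-strong convexity with respect to `ρ`, which stands for a norm on `E` other than `‖·‖`;
Mathlib's `StrongConvexOn` only measures lengths by the latter. -/
def StrongConvexOnWrt (Q : Set E) (ρ d : E → ℝ) : Prop :=
  ∀ z ∈ Q, ∀ w ∈ Q, ∀ t : ℝ, t ∈ Set.Icc (0 : ℝ) 1 →
    d (t • z + (1 - t) • w) ≤ t * d z + (1 - t) * d w - t * (1 - t) / 2 * ρ (z - w) ^ 2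

/-- The Bregman divergence `V[y](x)` of `d`, where `d'` is the derivative of `d`. It is a parameter
because derivatives within `Q` need not be unique. -/
def bregmanDiv (d : E → ℝ) (d' : E → StrongDual ℝ E) (y x : E) : ℝ :=
  d x - d y - d' y (x - y)

lemma half_sq_le_bregmanDiv (hQ : Convex ℝ Q) (hd : HasFDerivWithinAt d (d' y) Q y)
    (hstrong : StrongConvexOnWrt Q ρ d) (hy : y ∈ Q) (hz : z ∈ Q) :
    ρ (z - y) ^ 2 / 2 ≤ bregmanDiv d d' y z := by
  have hderiv : HasDerivAt
      (fun t => t * d z + (1 - t) * d y - t * (1 - t) / 2 * ρ (z - y) ^ 2)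
      (d z - d y - ρ (z - y) ^ 2 / 2) 0 := by
    have hid := hasDerivAt_id (0 : ℝ)
    have hone := hid.const_sub 1
    exact (((hid.mul_const (d z)).add (hone.mul_const (d y))).sub
      (((hid.mul hone).div_const 2).mul_const (ρ (z - y) ^ 2))).congr_deriv
        (by simp only [id]; ring)
  have hle := hasFDerivWithinAt_apply_sub_le_of_lineMap_le hQ hy hz hd hderiv (by simp)
    fun t ht => by
      rw [AffineMap.lineMap_apply_module, add_comm]
      exact hstrong z hz y hy t ht
  rw [bregmanDiv]
  linarith

lemma bregmanDiv_nonneg (hQ : Convex ℝ Q) (hd : HasFDerivWithinAt d (d' y) Q y)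
    (hstrong : StrongConvexOnWrt Q ρ d) (hy : y ∈ Q) (hz : z ∈ Q) : 0 ≤ bregmanDiv d d' y z :=
  (by positivity : 0 ≤ ρ (z - y) ^ 2 / 2).trans (half_sq_le_bregmanDiv hQ hd hstrong hy hz)

/-- `y` is an `ε`-inexact minimizer of `φ` on `Q`: some subgradient `h` of `φ` at `y`, relative to
`Q`, satisfies `h (z - y) ≥ -ε` on `Q`. This is stronger than `φ y ≤ φ z + ε`. Membership `y ∈ Q`
is not part of the definition. -/
def IsInexactMinOn (ε : ℝ) (φ : E → ℝ) (Q : Set E) (y : E) : Prop :=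
  ∃ h : StrongDual ℝ E, (∀ z ∈ Q, φ y + h (z - y) ≤ φ z) ∧ ∀ z ∈ Q, -ε ≤ h (z - y)

namespace IsInexactMinOn

lemma nonneg (hmin : IsInexactMinOn ε φ Q y) (hy : y ∈ Q) : 0 ≤ ε := by
  obtain ⟨h, -, hε⟩ := hmin
  simpa using hε y hy

lemma add_bregmanDiv_le (hφ : ConvexOn ℝ Q φ) (hd : HasFDerivWithinAt d (d' y) Q y)
    (hy : y ∈ Q) (hz : z ∈ Q)
    (hmin : IsInexactMinOn ε (fun w => φ w + bregmanDiv d d' x w) Q y) :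
    φ y + bregmanDiv d d' x y + bregmanDiv d d' y z ≤ φ z + bregmanDiv d d' x z + ε := by
  obtain ⟨h, hsub, hε⟩ := hmin
  set s : ℝ := φ z - φ y + ε - d' x (z - y)
  have hderiv : HasDerivAt (fun t => -d y + t * s) s 0 := by
    simpa using ((hasDerivAt_id (0 : ℝ)).mul_const s).const_add (-d y)
  have hseg : ∀ t ∈ Set.Icc (0 : ℝ) 1, -d (AffineMap.lineMap y z t) ≤ -d y + t * s := by
    intro t ht
    have hconv : φ (AffineMap.lineMap y z t) ≤ (1 - t) * φ y + t * φ z := by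
      rw [AffineMap.lineMap_apply_module]
      exact hφ.2 hy hz (sub_nonneg.2 ht.2) ht.1 (sub_add_cancel 1 t)
    have hopt := hsub _ (hφ.1.lineMap_mem hy hz ht)
    have hlin : AffineMap.lineMap y z t - y = t • (z - y) := AffineMap.lineMap_vsub_left y z t
    have hsplit : AffineMap.lineMap y z t - x = (y - x) + t • (z - y) := by
      rw [← hlin]; abel
    have herr := mul_le_mul_of_nonneg_left (hε z hz) ht.1
    simp only [bregmanDiv, hlin, hsplit, map_add, map_smul, smul_eq_mul] at hopt
    linear_combination hopt + hconv + herr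
  have hle : -d' y (z - y) ≤ s := hasFDerivWithinAt_apply_sub_le_of_lineMap_le hφ.1 hy hz
    hd.neg hderiv (by simp) hseg
  have hadd : d' x (z - x) = d' x (z - y) + d' x (y - x) := by
    rw [← map_add, sub_add_sub_cancel]
  simp only [bregmanDiv]
  linear_combination hle + hadd

end IsInexactMinOn

/-- A step from `x` to `y` of the gradient method with stepsize `1 / L`, prox-function `d` and
inexact model `c + ψ` of `f` at `x`. Lengths are measured by `ρ`. The error `2 * δ` in the descent
condition is `δ` from the condition itself plus `δ` from evaluating `f` at `y` inexactly. -/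
structure IsInexactModelStep (Q : Set E) (f d : E → ℝ) (d' : E → StrongDual ℝ E) (ρ ψ : E → ℝ)
    (c L δ ε : ℝ) (x y : E) : Prop where
  pos : 0 < L
  convexOn : ConvexOn ℝ Q ψ
  model_le : ∀ z ∈ Q, c + ψ z ≤ f z
  descent : f y ≤ c + ψ y + L / 2 * ρ (y - x) ^ 2 + 2 * δ
  isInexactMinOn : IsInexactMinOn ε (fun z => 1 / L * ψ z + bregmanDiv d d' x z) Q y

lemma IsInexactModelStep.one_div_mul_sub_le {ψ : E → ℝ} {c L δ : ℝ}
    (hd : ∀ w ∈ Q, HasFDerivWithinAt d (d' w) Q w) (hstrong : StrongConvexOnWrt Q ρ d)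
    (hx : x ∈ Q) (hy : y ∈ Q) (hz : z ∈ Q) (h : IsInexactModelStep Q f d d' ρ ψ c L δ ε x y) :
    1 / L * (f y - f z) ≤
      bregmanDiv d d' x z - bregmanDiv d d' y z + (ε + 2 * (1 / L * δ)) := by
  have hL := h.pos
  have hprox := IsInexactMinOn.add_bregmanDiv_le (h.convexOn.smul (one_div_pos.2 hL).le)
    (hd y hy) hy hz h.isInexactMinOn
  have hquad := half_sq_le_bregmanDiv h.convexOn.1 (hd x hx) hstrong hx hy
  have hdescent : f y - f z ≤ ψ y - ψ z + L / 2 * ρ (y - x) ^ 2 + 2 * δ := by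
    linarith [h.model_le z hz, h.descent]
  calc 1 / L * (f y - f z)
      ≤ 1 / L * (ψ y - ψ z + L / 2 * ρ (y - x) ^ 2 + 2 * δ) := by gcongr
    _ = 1 / L * ψ y - 1 / L * ψ z + ρ (y - x) ^ 2 / 2 + 2 * (1 / L * δ) := by field_simp
    _ ≤ _ := by simp only [smul_eq_mul] at hprox; linarith

end OneStep

lemma map_centerMass_sub_le_of_telescoping {E : Type*} [AddCommGroup E] [Module ℝ E]
    {Q : Set E} {f : E → ℝ} (hf : ConvexOn ℝ Q f) {N : ℕ} {α v e : ℕ → ℝ} {p : ℕ → E} {m : ℝ}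
    (hα : ∀ k < N, 0 ≤ α k) (hpos : 0 < ∑ k ∈ range N, α k) (hp : ∀ k < N, p k ∈ Q)
    (hv : 0 ≤ v N) (hstep : ∀ k < N, α k * (f (p k) - m) ≤ v k - v (k + 1) + e k) :
    f ((range N).centerMass α p) - m ≤ (∑ k ∈ range N, α k)⁻¹ * (v 0 + ∑ k ∈ range N, e k) := by
  have hjensen : f ((range N).centerMass α p) ≤
      (∑ k ∈ range N, α k)⁻¹ * ∑ k ∈ range N, α k * f (p k) :=
    hf.map_centerMass_le (fun k hk => hα k (mem_range.1 hk)) hpos fun k hk => hp k (mem_range.1 hk)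
  calc f ((range N).centerMass α p) - m
      ≤ (∑ k ∈ range N, α k)⁻¹ * ∑ k ∈ range N, α k * f (p k) - m := sub_le_sub_right hjensen m
    _ = (∑ k ∈ range N, α k)⁻¹ * ∑ k ∈ range N, α k * (f (p k) - m) := by
        simp only [mul_sub, sum_sub_distrib, ← sum_mul]
        rw [inv_mul_cancel_left₀ hpos.ne']
    _ ≤ (∑ k ∈ range N, α k)⁻¹ * ∑ k ∈ range N, (v k - v (k + 1) + e k) := by
        gcongr with k hk
        exact hstep k (mem_range.1 hk)
    _ ≤ _ := by
        rw [sum_add_distrib, sum_range_sub']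
        gcongr
        exact sub_le_self _ hv

lemma div_le_sum_one_div {N : ℕ} {L : ℕ → ℝ} {M : ℝ} (hL : ∀ k < N, 0 < L k)
    (hM : ∀ k < N, L k ≤ M) : (N : ℝ) / M ≤ ∑ k ∈ range N, 1 / L k := by
  have h := card_nsmul_le_sum (range N) (fun k => 1 / L k) (1 / M) fun k hk =>
    one_div_le_one_div_of_le (hL k (mem_range.1 hk)) (hM k (mem_range.1 hk))
  simpa [div_eq_mul_inv] using h

section Method

variable {E : Type*} [NormedAddCommGroup E] [NormedSpace ℝ E] {Q : Set E} {f d ρ : E → ℝ}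
  {d' : E → StrongDual ℝ E} {N : ℕ} {x : ℕ → E} {ψ : ℕ → E → ℝ} {c L δ ε : ℕ → ℝ} {z : E}

theorem adaptive_gradient_method_bound (hf : ConvexOn ℝ Q f)
    (hd : ∀ w ∈ Q, HasFDerivWithinAt d (d' w) Q w) (hstrong : StrongConvexOnWrt Q ρ d)
    (hN : 0 < N) (hx : ∀ k ≤ N, x k ∈ Q) (hz : z ∈ Q)
    (hstep : ∀ k < N,
      IsInexactModelStep Q f d d' ρ (ψ k) (c k) (L k) (δ k) (ε k) (x k) (x (k + 1))) :
    f ((range N).centerMass (fun k => 1 / L k) fun k => x (k + 1)) - f z ≤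
      (∑ k ∈ range N, 1 / L k)⁻¹ * (bregmanDiv d d' (x 0) z + ∑ k ∈ range N, ε k) +
        2 / (∑ k ∈ range N, 1 / L k) * ∑ k ∈ range N, 1 / L k * δ k := by
  have hα : ∀ k < N, 0 < 1 / L k := fun k hk => one_div_pos.2 (hstep k hk).pos
  have hpos : 0 < ∑ k ∈ range N, 1 / L k :=
    sum_pos (fun k hk => hα k (mem_range.1 hk)) (nonempty_range_iff.2 hN.ne')
  have hbound := map_centerMass_sub_le_of_telescoping (v := fun k => bregmanDiv d d' (x k) z) hf
    (fun k hk => (hα k hk).le) hpos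
    (fun k hk => hx (k + 1) hk)
    (bregmanDiv_nonneg hf.1 (hd _ (hx N le_rfl)) hstrong (hx N le_rfl) hz)
    fun k hk => (hstep k hk).one_div_mul_sub_le hd hstrong (hx k hk.le) (hx (k + 1) hk) hz
  refine hbound.trans_eq ?_
  rw [sum_add_distrib, ← mul_sum]
  ring

theorem adaptive_gradient_method_uniform_constant_general (hf : ConvexOn ℝ Q f)
    (hd : ∀ w ∈ Q, HasFDerivWithinAt d (d' w) Q w) (hstrong : StrongConvexOnWrt Q ρ d)
    (hN : 0 < N) (hx : ∀ k ≤ N, x k ∈ Q) (hz : z ∈ Q)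
    (hstep : ∀ k < N,
      IsInexactModelStep Q f d d' ρ (ψ k) (c k) (L k) (δ k) (ε k) (x k) (x (k + 1)))
    {M : ℝ} (hM : ∀ k < N, L k ≤ M) :
    (N : ℝ) / M ≤ ∑ k ∈ range N, 1 / L k ∧
    f ((range N).centerMass (fun k => 1 / L k) fun k => x (k + 1)) - f z ≤
      M * bregmanDiv d d' (x 0) z / N + M / N * ∑ k ∈ range N, ε k +
        2 / (∑ k ∈ range N, 1 / L k) * ∑ k ∈ range N, 1 / L k * δ k := by
  have hsum := div_le_sum_one_div (fun k hk => (hstep k hk).pos) hM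
  have hMpos : 0 < M := (hstep 0 hN).pos.trans_le (hM 0 hN)
  have hinv : (∑ k ∈ range N, 1 / L k)⁻¹ ≤ M / N := by
    rw [← inv_div]
    exact inv_anti₀ (by positivity) hsum
  have hV : 0 ≤ bregmanDiv d d' (x 0) z :=
    bregmanDiv_nonneg hf.1 (hd _ (hx 0 N.zero_le)) hstrong (hx 0 N.zero_le) hz
  have hε : 0 ≤ ∑ k ∈ range N, ε k := sum_nonneg fun k hk =>
    (hstep k (mem_range.1 hk)).isInexactMinOn.nonneg (hx (k + 1) (mem_range.1 hk))
  refine ⟨hsum, (adaptive_gradient_method_bound hf hd hstrong hN hx hz hstep).trans ?_⟩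
  rw [mul_div_right_comm, ← mul_add]
  gcongr

end Method

/-- **Adaptive gradient method with an inexact model (uniform constant).**
`E = ℝⁿ` with the standard inner product; `nrm` is a (general) norm on `E`;
`d` is a continuously differentiable, `1`-strongly convex (w.r.t. `nrm`) prox-function
with gradient `Dd`, and `V y x = d x - d y - ⟪Dd y, x - y⟫` is the Bregman divergence.
`ψ k` is the model `ψ_{δ_k}(·, x_k)` with value `fδ k` at `x k`. -/
theorem adaptive_gradient_method_uniform_constant
    {n : ℕ} (Q : Set (EuclideanSpace ℝ (Fin n)))
    (hQne : Q.Nonempty) (hQclosed : IsClosed Q) (hQconv : Convex ℝ Q)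
    (f : EuclideanSpace ℝ (Fin n) → ℝ) (hfconv : ConvexOn ℝ Q f)
    -- a general norm `nrm` on `ℝⁿ`
    (nrm : EuclideanSpace ℝ (Fin n) → ℝ)
    (hnrm_zero : ∀ z, nrm z = 0 ↔ z = 0)
    (hnrm_smul : ∀ (c : ℝ) z, nrm (c • z) = |c| * nrm z)
    (hnrm_add : ∀ z w, nrm (z + w) ≤ nrm z + nrm w)
    -- the prox-function `d`, continuously differentiable and 1-strongly convex w.r.t. `nrm`
    (d : EuclideanSpace ℝ (Fin n) → ℝ)
    (Dd : EuclideanSpace ℝ (Fin n) → EuclideanSpace ℝ (Fin n))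
    (hd_diff : ∀ z ∈ Q, HasGradientWithinAt d (Dd z) Q z)
    (hd_cont : ContinuousOn Dd Q)
    (hd_strong : ∀ z ∈ Q, ∀ w ∈ Q, ∀ t : ℝ, t ∈ Set.Icc (0 : ℝ) 1 →
      d (t • z + (1 - t) • w) ≤
        t * d z + (1 - t) * d w - t * (1 - t) / 2 * nrm (z - w) ^ 2)
    -- Bregman divergence
    (V : EuclideanSpace ℝ (Fin n) → EuclideanSpace ℝ (Fin n) → ℝ)
    (hV : ∀ y z, V y z = d z - d y - ⟪Dd y, z - y⟫)
    -- the method data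
    (N : ℕ) (hN : 0 < N)
    (x : ℕ → EuclideanSpace ℝ (Fin n)) (hxQ : ∀ k, x k ∈ Q)
    (δ δt : ℕ → ℝ) (hδ : ∀ k, 0 ≤ δ k) (hδt : ∀ k, 0 ≤ δt k)
    (L : ℕ → ℝ) (hL : ∀ k, 0 < L (k + 1))
    (α : ℕ → ℝ) (hα : ∀ k, α (k + 1) = 1 / L (k + 1))
    (A : ℝ) (hA : A = ∑ k ∈ range N, α (k + 1))
    -- `ψ k = ψ_{δ_k}(·, x_k)` with value `fδ k = f_{δ_k}(x_k)`:
    -- a `(δ_k, L̄_{k+1}, nrm)`-model of `f` at `x_k` for some `L̄_{k+1} > 0`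
    (ψ : ℕ → EuclideanSpace ℝ (Fin n) → ℝ) (fδ : ℕ → ℝ)
    (hmodel : ∀ k, ∃ Lbar : ℝ, 0 < Lbar ∧
      ConvexOn ℝ Q (ψ k) ∧ ψ k (x k) = 0 ∧
      ∀ z ∈ Q, 0 ≤ f z - (fδ k + ψ k z) ∧
        f z - (fδ k + ψ k z) ≤ Lbar / 2 * nrm (z - x k) ^ 2 + δ k)
    -- the value of the model at the next iterate (`f_{δ_k}(x_{k+1})`)
    (fδnext : ℕ → ℝ)
    (hfδnext : ∀ k, 0 ≤ f (x (k + 1)) - fδnext k ∧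
      f (x (k + 1)) - fδnext k ≤ δ k)
    -- descent condition
    (hdescent : ∀ k, fδnext k ≤ fδ k + ψ k (x (k + 1)) +
      L (k + 1) / 2 * nrm (x (k + 1) - x k) ^ 2 + δ k)
    -- `x_{k+1}` is a `δ̃_k`-inexact minimizer of `φ_{k+1}(z) = (1/L_{k+1}) ψ k z + V (x k) z` on `Q`
    (hmin : ∀ k, ∃ h : EuclideanSpace ℝ (Fin n),
      (∀ z ∈ Q, (1 / L (k + 1)) * ψ k z + V (x k) z ≥
        (1 / L (k + 1)) * ψ k (x (k + 1)) + V (x k) (x (k + 1)) + ⟪h, z - x (k + 1)⟫) ∧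
      (∀ z ∈ Q, ⟪h, z - x (k + 1)⟫ ≥ -δt k))
    -- the optimum
    (xstar : EuclideanSpace ℝ (Fin n)) (hxstarQ : xstar ∈ Q)
    (hxstar : ∀ z ∈ Q, f xstar ≤ f z)
    (R : ℝ) (hR : V (x 0) xstar ≤ R ^ 2)
    -- averaged iterate
    (xbar : EuclideanSpace ℝ (Fin n))
    (hxbar : xbar = A⁻¹ • ∑ k ∈ range N, α (k + 1) • x (k + 1))
    -- uniform bound on the adaptive constants
    (Lu : ℝ) (hLu : 0 < Lu) (hLuniform : ∀ k < N, L (k + 1) ≤ 2 * Lu) :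
    A ≥ N / (2 * Lu) ∧
    f xbar - f xstar ≤
      2 * Lu * R ^ 2 / N + (2 * Lu / N) * ∑ k ∈ range N, δt k +
        (2 / A) * ∑ k ∈ range N, α (k + 1) * δ k := by
  obtain rfl : V = bregmanDiv d fun y => InnerProductSpace.toDual ℝ _ (Dd y) := funext₂ hV
  have hstep : ∀ k, IsInexactModelStep Q f d (fun y => InnerProductSpace.toDual ℝ _ (Dd y)) nrm
      (ψ k) (fδ k) (L (k + 1)) (δ k) (δt k) (x k) (x (k + 1)) := fun k => by
    obtain ⟨_, _, hψ, _, hm⟩ := hmodel k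
    obtain ⟨h, hsub, hh⟩ := hmin k
    exact ⟨hL k, hψ, fun z hz => sub_nonneg.1 (hm z hz).1,
      by linarith [(hfδnext k).2, hdescent k], InnerProductSpace.toDual ℝ _ h, hsub, hh⟩
  subst hA hxbar
  simp only [hα]
  exact (adaptive_gradient_method_uniform_constant_general hfconv
    (fun z hz => (hd_diff z hz).hasFDerivWithinAt) hd_strong hN (fun k _ => hxQ k) hxstarQ
    (fun k _ => hstep k) hLuniform).imp_right (·.trans (by gcongr))
end

section
/- Expected rate of the stochastic fast gradient method. In the setting of the fast gradient method with a (δ₁, δ₂, L, ‖·‖₂)-model, suppose the models are random: on a probability space with a filtration (F_k), the iterates x_k, u_k, y_{k+1} are F_k-measurable, the noise terms satisfy E[δ₁^k(x_k, y_{k+1}) | F_k] = 0 and E[δ₁^k(x_*, y_{k+1}) | F_k] = 0 (conditional unbiasedness), and E[δ₂^k] ≤ δ̂₂ for all k, where δ̂₂ ≥ 0. Then after N iterations E[f(x_N)] − f(x_*) ≤ 4LR²/N² + N δ̂₂, where x_* is a minimizer of f on Q with (1/2)‖x_* − x_0‖₂² ≤ R². -/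
open Finset MeasureTheory RealInnerProductSpace

/-!
The proof is a potential-function argument, carried out for each outcome and integrated only at the
end. Along a run of the method the potential

`A_k (f(x_k) - f(x_*)) + ‖x_* - u_k‖² / 2`

increases in one step by at most
`A_k δ₁^k(x_k, y_{k+1}) + α_{k+1} δ₁^k(x_*, y_{k+1}) + A_{k+1} δ₂^k`: evaluate the upper model bound
at `x_{k+1}`, split the model there by convexity, use strong convexity of the objective minimized by
`u_{k+1}`, and bound the model from above at `x_k` and `x_*`. The quadratic terms cancel because
`A_{k+1} = L α_{k+1}²`.

Summing these inequalities bounds `A_N (f(x_N) - f(x_*))` by `‖x_* - u_0‖² / 2` plus the noise. In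
expectation the `δ₁` terms drop out and the `δ₂` terms contribute at most `N A_N δ̂₂`, as `A` is
nondecreasing. It remains to divide by `A_N ≥ N² / (4L)`.
-/

section Convexity

variable {E : Type*} [NormedAddCommGroup E]

open Topology in
lemma add_le_of_uniformConvexOn_of_isMinOn [NormedSpace ℝ E] {s : Set E} {φ : ℝ → ℝ} {g : E → ℝ}
    {p z : E} (hg : UniformConvexOn s φ g) (hmin : IsMinOn g s p) (hp : p ∈ s) (hz : z ∈ s) :
    g p + φ ‖p - z‖ ≤ g z := by
  have hsegment : ∀ t ∈ Set.Ioo (0 : ℝ) 1, g p + (1 - t) * φ ‖p - z‖ ≤ g z := by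
    intro t ⟨ht0, ht1⟩
    have hle : g p ≤ (1 - t) * g p + t * g z - (1 - t) * t * φ ‖p - z‖ :=
      (hmin (hg.1 hp hz (sub_nonneg.2 ht1.le) ht0.le (sub_add_cancel 1 t))).trans
        (hg.2 hp hz (sub_nonneg.2 ht1.le) ht0.le (sub_add_cancel 1 t))
    refine le_of_mul_le_mul_left ?_ ht0
    linarith
  have hlim : Filter.Tendsto (fun t : ℝ => g p + (1 - t) * φ ‖p - z‖) (𝓝[>] 0)
      (𝓝 (g p + (1 - 0) * φ ‖p - z‖)) :=
    (Continuous.tendsto (by fun_prop) 0).mono_left nhdsWithin_le_nhds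
  simpa using le_of_tendsto hlim
    (Filter.eventually_of_mem (Ioo_mem_nhdsGT one_pos) hsegment)

variable [InnerProductSpace ℝ E]

lemma strongConvexOn_mul_norm_sub_sq {s : Set E} (hs : Convex ℝ s) (m : ℝ) (c : E) :
    StrongConvexOn s m fun z => m / 2 * ‖z - c‖ ^ 2 := by
  rw [strongConvexOn_iff_convex]
  have haffine : (fun z => m / 2 * ‖z - c‖ ^ 2 - m / 2 * ‖z‖ ^ 2) =
      fun z => (innerₛₗ ℝ (-(m • c))) z + m / 2 * ‖c‖ ^ 2 := by
    ext z
    rw [innerₛₗ_apply_apply, inner_neg_left, real_inner_smul_left, norm_sub_sq_real,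
      real_inner_comm]
    ring
  rw [haffine]
  exact (LinearMap.convexOn _ hs).add_const _

lemma prox_three_point {s : Set E} {φ : E → ℝ} {c p z : E} (hφ : ConvexOn ℝ s φ)
    (hmin : IsMinOn (fun z => 1 / 2 * ‖z - c‖ ^ 2 + φ z) s p) (hp : p ∈ s) (hz : z ∈ s) :
    1 / 2 * ‖p - c‖ ^ 2 + φ p + 1 / 2 * ‖z - p‖ ^ 2 ≤ 1 / 2 * ‖z - c‖ ^ 2 + φ z := by
  have hconv := (strongConvexOn_mul_norm_sub_sq hφ.1 1 c).add hφ.uniformConvexOn_zero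
  simpa [norm_sub_rev p z] using add_le_of_uniformConvexOn_of_isMinOn hconv hmin hp hz

end Convexity

section Weights

/-- The step sizes `α` and weights `A` of the fast gradient method with constant `L`: starting from
`A 0 = 0`, the step `α (k + 1)` is the largest root of `A k + a = L * a ^ 2`, and `A (k + 1)` is
`A k + α (k + 1)`. As in the method, steps are indexed from `1`. -/
structure IsFastGradientWeights (L : ℝ) (α A : ℕ → ℝ) : Prop where
  A_zero : A 0 = 0
  A_succ : ∀ k, A (k + 1) = A k + α (k + 1)
  isGreatest_root : ∀ k, IsGreatest {a | A k + a = L * a ^ 2} (α (k + 1))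

/-- The quadratic equation says `(2 * L * a - 1) ^ 2 = 4 * L * A + 1`, and the largest root has
`2 * L * a - 1 ≥ 0`. -/
lemma add_one_le_of_isGreatest_root {L A a c : ℝ} (hL : 0 < L)
    (ha : IsGreatest {b | A + b = L * b ^ 2} a) (hc : c ^ 2 ≤ 4 * L * A) :
    c + 1 ≤ 2 * L * a := by
  have hroot : A + a = L * a ^ 2 := ha.1
  have hother : 1 / L - a ≤ a := ha.2 <| by
    rw [Set.mem_ofPred_eq]
    field_simp
    linear_combination L * hroot
  have hlarge : 1 ≤ 2 * L * a := by
    rw [sub_le_iff_le_add, div_le_iff₀ hL] at hother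
    linarith
  have hsq : c ^ 2 ≤ (2 * L * a - 1) ^ 2 := by
    linear_combination hc + 4 * L * hroot
  linarith [le_of_sq_le_sq hsq (sub_nonneg.2 hlarge)]

namespace IsFastGradientWeights

variable {L : ℝ} {α A : ℕ → ℝ}

lemma A_succ_eq_mul_sq (hw : IsFastGradientWeights L α A) (k : ℕ) :
    A (k + 1) = L * α (k + 1) ^ 2 :=
  (hw.A_succ k).trans (hw.isGreatest_root k).1

lemma sq_le_mul_A (hw : IsFastGradientWeights L α A) (hL : 0 < L) (k : ℕ) :
    (k : ℝ) ^ 2 ≤ 4 * L * A k := by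
  induction k with
  | zero => simp [hw.A_zero]
  | succ k ih =>
    have hα : (k : ℝ) + 1 ≤ 2 * L * α (k + 1) :=
      add_one_le_of_isGreatest_root hL (hw.isGreatest_root k) ih
    calc ((k + 1 : ℕ) : ℝ) ^ 2 ≤ (2 * L * α (k + 1)) ^ 2 := by push_cast; gcongr
      _ = 4 * L * A (k + 1) := by rw [hw.A_succ_eq_mul_sq]; ring

lemma A_nonneg (hw : IsFastGradientWeights L α A) (hL : 0 < L) (k : ℕ) : 0 ≤ A k :=
  nonneg_of_mul_nonneg_right ((sq_nonneg _).trans (hw.sq_le_mul_A hL k)) (by positivity)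

lemma A_pos (hw : IsFastGradientWeights L α A) (hL : 0 < L) {k : ℕ} (hk : 0 < k) : 0 < A k :=
  pos_of_mul_pos_right (lt_of_lt_of_le (by positivity) (hw.sq_le_mul_A hL k)) (by positivity)

lemma inv_A_le (hw : IsFastGradientWeights L α A) (hL : 0 < L) {k : ℕ} (hk : 0 < k) :
    (A k)⁻¹ ≤ 4 * L / k ^ 2 := by
  rw [inv_le_comm₀ (hw.A_pos hL hk) (by positivity), inv_div, div_le_iff₀' (by positivity)]
  exact hw.sq_le_mul_A hL k

lemma α_succ_nonneg (hw : IsFastGradientWeights L α A) (hL : 0 < L) (k : ℕ) :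
    0 ≤ α (k + 1) := by
  have hα : (k : ℝ) + 1 ≤ 2 * L * α (k + 1) :=
    add_one_le_of_isGreatest_root hL (hw.isGreatest_root k) (hw.sq_le_mul_A hL k)
  exact nonneg_of_mul_nonneg_right (le_trans (by positivity) hα) (by positivity)

lemma monotone_A (hw : IsFastGradientWeights L α A) (hL : 0 < L) : Monotone A :=
  monotone_nat_of_le_succ fun k => by linarith [hw.A_succ k, hw.α_succ_nonneg hL k]

end IsFastGradientWeights

end Weights

section Run

variable {E : Type*}

/-- `φ` is a `(δ₁, δ₂, L)`-model of `f` at `y` on `Q`, up to the normalization `φ y = 0`; here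
`δ₁ z` stands for the value `δ₁(z, y)` of the lower error. -/
structure IsInexactModelAt [NormedAddCommGroup E] [NormedSpace ℝ E] (Q : Set E) (f : E → ℝ) (L : ℝ)
    (δ₁ : E → ℝ) (δ₂ : ℝ) (y : E) (φ : E → ℝ) : Prop where
  convexOn : ConvexOn ℝ Q φ
  bounds : ∀ z ∈ Q, -δ₁ z ≤ f z - (f y + φ z) ∧
    f z - (f y + φ z) ≤ L / 2 * ‖z - y‖ ^ 2 + δ₂

/-- The Lyapunov function of the method at step `k`, relative to the comparison point `xs`. -/
noncomputable def fastGradientPotential [NormedAddCommGroup E] (f : E → ℝ) (A : ℕ → ℝ)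
    (x u : ℕ → E) (xs : E) (k : ℕ) : ℝ :=
  A k * (f (x k) - f xs) + 1 / 2 * ‖xs - u k‖ ^ 2

/-- The bound on the increase of the potential relative to `xs` in step `k`, coming from the
inexactness of the model. -/
def fastGradientError (α A : ℕ → ℝ) (δ₁ : ℕ → E → E → ℝ) (δ₂ : ℕ → ℝ) (x y : ℕ → E) (xs : E)
    (k : ℕ) : ℝ :=
  A k * δ₁ k (x k) (y (k + 1)) + α (k + 1) * δ₁ k xs (y (k + 1)) + A (k + 1) * δ₂ k

variable [NormedAddCommGroup E] [InnerProductSpace ℝ E]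

/-- `x`, `y`, `u` are the iterates of the fast gradient method for `f` on `Q` with step sizes `α`,
weights `A` and models `ψ k`, the errors of `ψ k` being `δ₁ k` and `δ₂ k`. The run starts at `u 0`,
and the query points `y` are indexed from `1`. -/
structure IsFastGradientRun (Q : Set E) (f : E → ℝ) (L : ℝ) (α A : ℕ → ℝ) (ψ : ℕ → E → ℝ)
    (δ₁ : ℕ → E → E → ℝ) (δ₂ : ℕ → ℝ) (x y u : ℕ → E) : Prop where
  x_mem : ∀ k, x k ∈ Q
  u_succ_mem : ∀ k, u (k + 1) ∈ Q
  y_succ : ∀ k, y (k + 1) = (A (k + 1))⁻¹ • (α (k + 1) • u k + A k • x k)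
  isModelAt : ∀ k, IsInexactModelAt Q f L (fun z => δ₁ k z (y (k + 1))) (δ₂ k) (y (k + 1)) (ψ k)
  isMinOn : ∀ k, IsMinOn (fun z => 1 / 2 * ‖z - u k‖ ^ 2 + α (k + 1) * ψ k z) Q (u (k + 1))
  x_succ : ∀ k, x (k + 1) = (A (k + 1))⁻¹ • (α (k + 1) • u (k + 1) + A k • x k)

namespace IsFastGradientRun

variable {Q : Set E} {f : E → ℝ} {L : ℝ} {α A : ℕ → ℝ} {ψ : ℕ → E → ℝ} {δ₁ : ℕ → E → E → ℝ}
  {δ₂ : ℕ → ℝ} {x y u : ℕ → E} {xs : E}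

lemma mul_norm_x_succ_sub_y_succ_sq (hrun : IsFastGradientRun Q f L α A ψ δ₁ δ₂ x y u)
    (hw : IsFastGradientWeights L α A) (hL : 0 < L) (k : ℕ) :
    A (k + 1) * (L / 2 * ‖x (k + 1) - y (k + 1)‖ ^ 2) = 1 / 2 * ‖u (k + 1) - u k‖ ^ 2 := by
  have hdiff : x (k + 1) - y (k + 1) = ((A (k + 1))⁻¹ * α (k + 1)) • (u (k + 1) - u k) := by
    rw [hrun.x_succ, hrun.y_succ]
    module
  have hA : A (k + 1) ≠ 0 := (hw.A_pos hL k.succ_pos).ne'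
  rw [hdiff, norm_smul, mul_pow, Real.norm_eq_abs, sq_abs]
  field_simp
  rw [← hw.A_succ_eq_mul_sq]

lemma mul_model_x_succ_le (hrun : IsFastGradientRun Q f L α A ψ δ₁ δ₂ x y u)
    (hw : IsFastGradientWeights L α A) (hL : 0 < L) (k : ℕ) :
    A (k + 1) * ψ k (x (k + 1)) ≤ α (k + 1) * ψ k (u (k + 1)) + A k * ψ k (x k) := by
  have hA : 0 < α (k + 1) + A k := by
    linarith [hw.A_succ k, hw.A_pos hL k.succ_pos]
  have hconv := (convexOn_iff_div.1 (hrun.isModelAt k).convexOn).2 (hrun.u_succ_mem k)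
    (hrun.x_mem k) (hw.α_succ_nonneg hL k) (hw.A_nonneg hL k) hA
  have hx : x (k + 1) = (α (k + 1) / (α (k + 1) + A k)) • u (k + 1) +
      (A k / (α (k + 1) + A k)) • x k := by
    rw [hrun.x_succ, hw.A_succ, add_comm (A k)]
    module
  rw [← hx, smul_eq_mul, smul_eq_mul, div_mul_eq_mul_div, div_mul_eq_mul_div, ← add_div,
    le_div_iff₀ hA] at hconv
  rwa [hw.A_succ, add_comm (A k), mul_comm]

lemma potential_succ_le (hrun : IsFastGradientRun Q f L α A ψ δ₁ δ₂ x y u)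
    (hw : IsFastGradientWeights L α A) (hL : 0 < L) (hxs : xs ∈ Q) (k : ℕ) :
    fastGradientPotential f A x u xs (k + 1) ≤
      fastGradientPotential f A x u xs k + fastGradientError α A δ₁ δ₂ x y xs k := by
  obtain ⟨hconv, hbounds⟩ := hrun.isModelAt k
  have hα := hw.α_succ_nonneg hL k
  have hupper := mul_le_mul_of_nonneg_left (hbounds _ (hrun.x_mem (k + 1))).2
    (hw.A_nonneg hL (k + 1))
  have hlower_x := mul_le_mul_of_nonneg_left (hbounds _ (hrun.x_mem k)).1 (hw.A_nonneg hL k)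
  have hlower_xs := mul_le_mul_of_nonneg_left (hbounds _ hxs).1 hα
  have hsplit := hrun.mul_model_x_succ_le hw hL k
  have hprox := prox_three_point (hconv.smul hα) (hrun.isMinOn k) (hrun.u_succ_mem k) hxs
  rw [mul_add, hrun.mul_norm_x_succ_sub_y_succ_sq hw hL] at hupper
  simp only [smul_eq_mul] at hprox
  simp only [fastGradientPotential, fastGradientError]
  rw [hw.A_succ] at hupper hsplit ⊢
  linarith

lemma potential_le (hrun : IsFastGradientRun Q f L α A ψ δ₁ δ₂ x y u)
    (hw : IsFastGradientWeights L α A) (hL : 0 < L) (hxs : xs ∈ Q) (k : ℕ) :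
    fastGradientPotential f A x u xs k ≤
      1 / 2 * ‖xs - u 0‖ ^ 2 + ∑ i ∈ range k, fastGradientError α A δ₁ δ₂ x y xs i := by
  induction k with
  | zero => simp [fastGradientPotential, hw.A_zero]
  | succ k ih =>
    rw [sum_range_succ]
    linarith [hrun.potential_succ_le hw hL hxs k]

lemma mul_sub_le (hrun : IsFastGradientRun Q f L α A ψ δ₁ δ₂ x y u)
    (hw : IsFastGradientWeights L α A) (hL : 0 < L) (hxs : xs ∈ Q) (k : ℕ) :
    A k * (f (x k) - f xs) ≤
      1 / 2 * ‖xs - u 0‖ ^ 2 + ∑ i ∈ range k, fastGradientError α A δ₁ δ₂ x y xs i :=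
  (le_add_of_nonneg_right (by positivity)).trans (hrun.potential_le hw hL hxs k)

end IsFastGradientRun

end Run

section Expectation

variable {Ω : Type*} {m0 : MeasurableSpace Ω} {μ : Measure Ω}

lemma integral_eq_zero_of_condExp_ae_eq_zero {F : Type*} [NormedAddCommGroup F] [NormedSpace ℝ F]
    [CompleteSpace F] {m : MeasurableSpace Ω} (hm : m ≤ m0) [SigmaFinite (μ.trim hm)] {g : Ω → F}
    (hg : μ[g | m] =ᵐ[μ] 0) : ∫ ω, g ω ∂μ = 0 := by
  rw [← integral_condExp hm, integral_congr_ae hg, integral_zero']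

variable {E : Type*} {α A : ℕ → ℝ} {δ₁ : ℕ → Ω → E → E → ℝ} {δ₂ : ℕ → Ω → ℝ} {x y : ℕ → Ω → E}
  {xs : E}

lemma integrable_fastGradientError {k : ℕ}
    (hδ₁ : Integrable (fun ω => δ₁ k ω (x k ω) (y (k + 1) ω)) μ)
    (hδ₁s : Integrable (fun ω => δ₁ k ω xs (y (k + 1) ω)) μ) (hδ₂ : Integrable (δ₂ k) μ) :
    Integrable (fun ω => fastGradientError α A (δ₁ · ω) (δ₂ · ω) (x · ω) (y · ω) xs k) μ :=
  ((hδ₁.const_mul _).add (hδ₁s.const_mul _)).add (hδ₂.const_mul _)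

lemma integral_fastGradientError {k : ℕ}
    (hδ₁ : Integrable (fun ω => δ₁ k ω (x k ω) (y (k + 1) ω)) μ)
    (hδ₁s : Integrable (fun ω => δ₁ k ω xs (y (k + 1) ω)) μ) (hδ₂ : Integrable (δ₂ k) μ) :
    ∫ ω, fastGradientError α A (δ₁ · ω) (δ₂ · ω) (x · ω) (y · ω) xs k ∂μ =
      A k * ∫ ω, δ₁ k ω (x k ω) (y (k + 1) ω) ∂μ +
        α (k + 1) * ∫ ω, δ₁ k ω xs (y (k + 1) ω) ∂μ + A (k + 1) * ∫ ω, δ₂ k ω ∂μ := by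
  have hsum : Integrable (fun ω => A k * δ₁ k ω (x k ω) (y (k + 1) ω) +
      α (k + 1) * δ₁ k ω xs (y (k + 1) ω)) μ := (hδ₁.const_mul _).add (hδ₁s.const_mul _)
  simp only [fastGradientError]
  rw [integral_add hsum (hδ₂.const_mul _),
    integral_add (hδ₁.const_mul _) (hδ₁s.const_mul _)]
  simp only [integral_const_mul]

variable [NormedAddCommGroup E] [InnerProductSpace ℝ E] [IsProbabilityMeasure μ] {Q : Set E}
  {f : E → ℝ} {L : ℝ} {ψ : ℕ → Ω → E → ℝ} {u : ℕ → Ω → E} {R δ₂hat : ℝ}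

lemma mul_integral_sub_le (hw : IsFastGradientWeights L α A) (hL : 0 < L)
    (hrun : ∀ᵐ ω ∂μ, IsFastGradientRun Q f L α A (ψ · ω) (δ₁ · ω) (δ₂ · ω)
      (x · ω) (y · ω) (u · ω)) (hxs : xs ∈ Q)
    (hu0 : Integrable (fun ω => 1 / 2 * ‖xs - u 0 ω‖ ^ 2) μ)
    (hδ₁ : ∀ k, Integrable (fun ω => δ₁ k ω (x k ω) (y (k + 1) ω)) μ)
    (hδ₁s : ∀ k, Integrable (fun ω => δ₁ k ω xs (y (k + 1) ω)) μ)
    (hδ₂ : ∀ k, Integrable (δ₂ k) μ) {N : ℕ} (hf : Integrable (fun ω => f (x N ω)) μ) :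
    A N * (∫ ω, f (x N ω) ∂μ - f xs) ≤ ∫ ω, 1 / 2 * ‖xs - u 0 ω‖ ^ 2 ∂μ +
      ∑ k ∈ range N, ∫ ω, fastGradientError α A (δ₁ · ω) (δ₂ · ω) (x · ω) (y · ω) xs k ∂μ := by
  have herr := fun k => integrable_fastGradientError (α := α) (A := A) (hδ₁ k) (hδ₁s k) (hδ₂ k)
  have hsum := integrable_finsetSum (range N) fun k _ => herr k
  calc A N * (∫ ω, f (x N ω) ∂μ - f xs)
      = ∫ ω, A N * (f (x N ω) - f xs) ∂μ := by
        rw [integral_const_mul, integral_sub hf (integrable_const _)]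
        simp
    _ ≤ ∫ ω, (1 / 2 * ‖xs - u 0 ω‖ ^ 2 + ∑ k ∈ range N,
          fastGradientError α A (δ₁ · ω) (δ₂ · ω) (x · ω) (y · ω) xs k) ∂μ :=
        integral_mono_ae ((hf.sub (integrable_const _)).const_mul _) (hu0.add hsum) <|
          hrun.mono fun ω hω => hω.mul_sub_le hw hL hxs N
    _ = _ := by rw [integral_add hu0 hsum, integral_finsetSum _ fun k _ => herr k]

theorem stochastic_fast_gradient_method_expected_rate_general
    (hw : IsFastGradientWeights L α A) (hL : 0 < L)
    (hrun : ∀ᵐ ω ∂μ, IsFastGradientRun Q f L α A (ψ · ω) (δ₁ · ω) (δ₂ · ω)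
      (x · ω) (y · ω) (u · ω)) (hxs : xs ∈ Q)
    (hu0 : Integrable (fun ω => 1 / 2 * ‖xs - u 0 ω‖ ^ 2) μ)
    (hR : ∫ ω, 1 / 2 * ‖xs - u 0 ω‖ ^ 2 ∂μ ≤ R ^ 2)
    (hδ₁ : ∀ k, Integrable (fun ω => δ₁ k ω (x k ω) (y (k + 1) ω)) μ)
    (hδ₁s : ∀ k, Integrable (fun ω => δ₁ k ω xs (y (k + 1) ω)) μ)
    (hδ₁_le : ∀ k, ∫ ω, δ₁ k ω (x k ω) (y (k + 1) ω) ∂μ ≤ 0)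
    (hδ₁s_le : ∀ k, ∫ ω, δ₁ k ω xs (y (k + 1) ω) ∂μ ≤ 0)
    (hδ₂hat : 0 ≤ δ₂hat) (hδ₂ : ∀ k, Integrable (δ₂ k) μ) (hδ₂_le : ∀ k, ∫ ω, δ₂ k ω ∂μ ≤ δ₂hat)
    {N : ℕ} (hN : 0 < N) (hf : Integrable (fun ω => f (x N ω)) μ) :
    ∫ ω, f (x N ω) ∂μ - f xs ≤ 4 * L * R ^ 2 / N ^ 2 + N * δ₂hat := by
  have hA := hw.A_pos hL hN
  have herror : ∀ k ∈ range N,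
      ∫ ω, fastGradientError α A (δ₁ · ω) (δ₂ · ω) (x · ω) (y · ω) xs k ∂μ ≤ A N * δ₂hat := by
    intro k hk
    rw [integral_fastGradientError (hδ₁ k) (hδ₁s k) (hδ₂ k)]
    have hbias_x := mul_nonpos_of_nonneg_of_nonpos (hw.A_nonneg hL k) (hδ₁_le k)
    have hbias_xs := mul_nonpos_of_nonneg_of_nonpos (hw.α_succ_nonneg hL k) (hδ₁s_le k)
    have hδ₂_weighted : A (k + 1) * ∫ ω, δ₂ k ω ∂μ ≤ A N * δ₂hat :=
      (mul_le_mul_of_nonneg_left (hδ₂_le k) (hw.A_nonneg hL _)).trans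
        (mul_le_mul_of_nonneg_right (hw.monotone_A hL (mem_range.1 hk)) hδ₂hat)
    linarith
  have hweighted : A N * (∫ ω, f (x N ω) ∂μ - f xs) ≤ R ^ 2 + N * (A N * δ₂hat) := by
    have hsum := sum_le_card_nsmul _ _ _ herror
    rw [card_range, nsmul_eq_mul] at hsum
    linarith [mul_integral_sub_le hw hL hrun hxs hu0 hδ₁ hδ₁s hδ₂ hf]
  calc ∫ ω, f (x N ω) ∂μ - f xs ≤ R ^ 2 / A N + N * δ₂hat := by
        rw [div_add' _ _ _ hA.ne', le_div_iff₀ hA]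
        linarith
    _ ≤ R ^ 2 * (4 * L / N ^ 2) + N * δ₂hat := by
        rw [div_eq_mul_inv]
        gcongr
        exact hw.inv_A_le hL hN
    _ = 4 * L * R ^ 2 / N ^ 2 + N * δ₂hat := by ring

end Expectation

/-- **Expected rate of the stochastic fast gradient method.**
The method runs pathwise on a probability space `(Ω, μ)` with filtration `ℱ`;
the random models `ψ k ω` are `(δ₁^k(ω), δ₂^k(ω), L, ‖·‖₂)`-models of `f` at `y_{k+1}(ω)`,
the noises `δ₁` are conditionally unbiased along the iterates, and `E[δ₂^k] ≤ δ̂₂`. -/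
theorem stochastic_fast_gradient_method_expected_rate
    {n : ℕ} (Q : Set (EuclideanSpace ℝ (Fin n)))
    (hQne : Q.Nonempty) (hQclosed : IsClosed Q) (hQconv : Convex ℝ Q)
    (f : EuclideanSpace ℝ (Fin n) → ℝ) (hfconv : ConvexOn ℝ Q f)
    (L : ℝ) (hL : 0 < L)
    (N : ℕ) (hN : 0 < N)
    -- probability space and filtration
    {Ω : Type*} {m0 : MeasurableSpace Ω} (μ : Measure Ω) [IsProbabilityMeasure μ]
    (ℱ : Filtration ℕ m0)
    -- random iterates, measurable w.r.t. the filtration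
    (x y u : ℕ → Ω → EuclideanSpace ℝ (Fin n))
    (hxmeas : ∀ k, Measurable[ℱ k] (x k))
    (humeas : ∀ k, Measurable[ℱ k] (u k))
    (hymeas : ∀ k, Measurable[ℱ k] (y (k + 1)))
    (hxQ : ∀ k ω, x k ω ∈ Q) (hyQ : ∀ k ω, y k ω ∈ Q) (huQ : ∀ k ω, u k ω ∈ Q)
    -- deterministic starting point
    (x0 : EuclideanSpace ℝ (Fin n)) (hx0 : ∀ ω, x 0 ω = x0)
    (hinit : ∀ ω, y 0 ω = x 0 ω ∧ u 0 ω = x 0 ω)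
    (α A : ℕ → ℝ) (hα0 : α 0 = 0) (hA0 : A 0 = 0)
    -- `α_{k+1}` is the largest root of `A_k + α = L α²`
    (hαroot : ∀ k, A k + α (k + 1) = L * α (k + 1) ^ 2 ∧
      ∀ β : ℝ, A k + β = L * β ^ 2 → β ≤ α (k + 1))
    (hArec : ∀ k, A (k + 1) = A k + α (k + 1))
    (hy : ∀ k ω, y (k + 1) ω = (A (k + 1))⁻¹ • (α (k + 1) • u k ω + A k • x k ω))
    -- the random models and noises
    (ψ : ℕ → Ω → EuclideanSpace ℝ (Fin n) → ℝ)
    (δ1 : ℕ → Ω → EuclideanSpace ℝ (Fin n) → EuclideanSpace ℝ (Fin n) → ℝ)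
    (δ2 : ℕ → Ω → ℝ)
    (hmodel : ∀ k ω, ConvexOn ℝ Q (ψ k ω) ∧ ψ k ω (y (k + 1) ω) = 0 ∧
      ∀ z ∈ Q, -δ1 k ω z (y (k + 1) ω) ≤ f z - (f (y (k + 1) ω) + ψ k ω z) ∧
        f z - (f (y (k + 1) ω) + ψ k ω z) ≤ L / 2 * ‖z - y (k + 1) ω‖ ^ 2 + δ2 k ω)
    -- `u_{k+1} = argmin_{z ∈ Q} [(1/2)‖z − u_k‖₂² + α_{k+1} ψ_k(z, y_{k+1})]`, pathwise
    (hmin : ∀ k ω, ∀ z ∈ Q,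
      (1 / 2) * ‖u (k + 1) ω - u k ω‖ ^ 2 + α (k + 1) * ψ k ω (u (k + 1) ω) ≤
        (1 / 2) * ‖z - u k ω‖ ^ 2 + α (k + 1) * ψ k ω z)
    (hx : ∀ k ω, x (k + 1) ω = (A (k + 1))⁻¹ • (α (k + 1) • u (k + 1) ω + A k • x k ω))
    -- the optimum
    (xstar : EuclideanSpace ℝ (Fin n)) (hxstarQ : xstar ∈ Q)
    (hxstar : ∀ z ∈ Q, f xstar ≤ f z)
    (R : ℝ) (hR : (1 / 2) * ‖xstar - x0‖ ^ 2 ≤ R ^ 2)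
    -- conditional unbiasedness of the `δ₁` noises along the iterates
    (hδ1int : ∀ k, Integrable (fun ω => δ1 k ω (x k ω) (y (k + 1) ω)) μ)
    (hδ1starint : ∀ k, Integrable (fun ω => δ1 k ω xstar (y (k + 1) ω)) μ)
    (hδ1unbiased : ∀ k, μ[fun ω => δ1 k ω (x k ω) (y (k + 1) ω)|ℱ k] =ᵐ[μ] 0)
    (hδ1starunbiased : ∀ k, μ[fun ω => δ1 k ω xstar (y (k + 1) ω)|ℱ k] =ᵐ[μ] 0)
    -- bound on the expectation of the `δ₂` noises
    (δ2hat : ℝ) (hδ2hat : 0 ≤ δ2hat)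
    (hδ2int : ∀ k, Integrable (δ2 k) μ)
    (hδ2exp : ∀ k, ∫ ω, δ2 k ω ∂μ ≤ δ2hat)
    -- integrability of the final value
    (hfint : Integrable (fun ω => f (x N ω)) μ) :
    (∫ ω, f (x N ω) ∂μ) - f xstar ≤ 4 * L * R ^ 2 / N ^ 2 + N * δ2hat := by
  have hw : IsFastGradientWeights L α A := ⟨hA0, hArec, hαroot⟩
  have hrun : ∀ ω, IsFastGradientRun Q f L α A (ψ · ω) (δ1 · ω) (δ2 · ω)
      (x · ω) (y · ω) (u · ω) := fun ω =>
    { x_mem := fun k => hxQ k ω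
      u_succ_mem := fun k => huQ (k + 1) ω
      y_succ := fun k => hy k ω
      isModelAt := fun k => ⟨(hmodel k ω).1, (hmodel k ω).2.2⟩
      isMinOn := fun k => hmin k ω
      x_succ := fun k => hx k ω }
  have hu0 : (fun ω => 1 / 2 * ‖xstar - u 0 ω‖ ^ 2) = fun _ => 1 / 2 * ‖xstar - x0‖ ^ 2 := by
    simp only [(hinit _).2, hx0]
  exact stochastic_fast_gradient_method_expected_rate_general hw hL (.of_forall hrun) hxstarQ
    (by rw [hu0]; exact integrable_const _) (by rw [hu0]; simpa using hR) hδ1int hδ1starint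
    (fun k => (integral_eq_zero_of_condExp_ae_eq_zero (ℱ.le k) (hδ1unbiased k)).le)
    (fun k => (integral_eq_zero_of_condExp_ae_eq_zero (ℱ.le k) (hδ1starunbiased k)).le)
    hδ2hat hδ2int hδ2exp hN hfint
end
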